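/- Let φ(x,y) = xy(x¹⁰ + 11x⁵y⁵ − y¹⁰). The degree-12 surface φ(x,y) − φ(z,t) = 0 in ℙ³ is smooth and contains exactly 864 lines. -/

import Mathlib

/-!
Write `F` for the binary form `φ`. It has no multiple factor, i.e. `∂F/∂x` and `∂F/∂y` have no common
zero besides the origin (`Icos.eq_zero_of_partials`), and this gives smoothness at once.

Lines on `F(x, y) = F(z, t)` follow Segre's dichotomy (`Icos.exists_join_or_graph`). View a line as a
plane `W ⊆ ℂ² × ℂ²`. If `W` meets `0 × ℂ²` only in `0`, it is the graph of a linear map preserving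
`F`. If `(0, w) ∈ W` with `w ≠ 0`, then for every `(u, v) ∈ W` the form `F` is constant on `v + ℂ w`.
A form without multiple factors can be constant on such an affine line only if `v ∈ ℂ w`
(`Icos.eq_zero_of_const`), so `W = ℂ u × ℂ w` with `u` and `w` zeros of `F`. The same fact shows that
a linear map preserving `F` is invertible. Hence the number of lines is `|R|² + |G|`, where `R ⊆ ℙ¹`
is the set of zeros of `F` and `G` is the group of linear automorphisms of `ℂ²` preserving `F`.

There are `12` zeros: `[1 : 0]` and the roots of the separable polynomial `u¹¹ + 11u⁶ - u`.
For `|G|`, apply the orbit-stabilizer theorem to `[1 : 0]`. Comparing coefficients, the stabilizer is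
`{diag(a, a⁻¹¹) : a⁶⁰ = 1}`, of order `60`. The orbit is all of `R`, because `G` contains the map
`(x, y) ↦ (y, -x)`, enough diagonal maps, and a multiple of `(x, y) ↦ (x + g y, g x - y)` with `g` the
golden ratio (`Icos.inOrbit_of_F_eq_zero`). So `|G| = 12 · 60 = 720` and the total is
`144 + 720 = 864`.
-/

open MvPolynomial

/-- A line in ℙ³: a 2-dimensional linear subspace of ℂ⁴. -/
def IsLine (W : Submodule ℂ (Fin 4 → ℂ)) : Prop :=
  Module.finrank ℂ W = 2

/-- The line `W` lies on the surface `F = 0`. -/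
def LiesOn (F : MvPolynomial (Fin 4) ℂ) (W : Submodule ℂ (Fin 4 → ℂ)) : Prop :=
  ∀ v ∈ W, eval v F = 0

/-- The surface `F = 0` is smooth: no nonzero point where all partials vanish. -/
def SmoothSurface (F : MvPolynomial (Fin 4) ℂ) : Prop :=
  ∀ v : Fin 4 → ℂ, v ≠ 0 → ∃ i : Fin 4, eval v (pderiv i F) ≠ 0

/-- The polynomial `φ(x,y) - ψ(z,t)` in four variables. -/
noncomputable def sepForm (φ ψ : MvPolynomial (Fin 2) ℂ) : MvPolynomial (Fin 4) ℂ :=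
  rename (fun i : Fin 2 => (⟨i.val, by omega⟩ : Fin 4)) φ -
    rename (fun i : Fin 2 => (⟨i.val + 2, by omega⟩ : Fin 4)) ψ

/-- The icosahedral invariant `φ(x,y) = xy(x¹⁰ + 11x⁵y⁵ - y¹⁰)`. -/
noncomputable def icosPoly : MvPolynomial (Fin 2) ℂ :=
  X 0 * X 1 * (X 0 ^ 10 + 11 * X 0 ^ 5 * X 1 ^ 5 - X 1 ^ 10)

namespace Icos

/-! ### The form and its partial derivatives -/

/-- The icosahedral form `xy(x¹⁰ + 11x⁵y⁵ - y¹⁰)` as a function on `ℂ²`. -/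
def F (v : Fin 2 → ℂ) : ℂ :=
  v 0 * v 1 * (v 0 ^ 10 + 11 * v 0 ^ 5 * v 1 ^ 5 - v 1 ^ 10)

/-- The partial derivative of `F` in the first variable. -/
def Fx (x y : ℂ) : ℂ := 11 * x ^ 10 * y + 66 * x ^ 5 * y ^ 6 - y ^ 11

/-- The partial derivative of `F` in the second variable. -/
def Fy (x y : ℂ) : ℂ := x ^ 11 + 66 * x ^ 6 * y ^ 5 - 11 * x * y ^ 10

/-- The form `F` has no multiple factor: its partial derivatives vanish together only at `0`. -/
lemma eq_zero_of_partials {x y : ℂ} (h1 : Fx x y = 0) (h2 : Fy x y = 0) : x = 0 ∧ y = 0 := by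
  unfold Fx at h1
  unfold Fy at h2
  by_cases hy : y = 0
  · subst hy
    simpa using h2
  by_cases hx : x = 0
  · subst hx
    simpa using h1
  exfalso
  have e1 : 11 * (x ^ 5) ^ 2 + 66 * x ^ 5 * y ^ 5 - (y ^ 5) ^ 2 = 0 := by
    apply mul_left_cancel₀ hy
    linear_combination h1
  have e2 : (x ^ 5) ^ 2 + 66 * x ^ 5 * y ^ 5 - 11 * (y ^ 5) ^ 2 = 0 := by
    apply mul_left_cancel₀ hx
    linear_combination h2
  have hy5 : y ^ 5 ≠ 0 := pow_ne_zero _ hy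
  have e3 : 11 * x ^ 5 = 2 * y ^ 5 := by
    apply mul_left_cancel₀ hy5
    linear_combination (1 / 12) * (e1 + e2) - (1 / 10) * (e1 - e2)
  have e4 : (y ^ 5) ^ 2 = 0 := by
    linear_combination (121 / 1250) * (e1 - e2) - (11 * x ^ 5 + 2 * y ^ 5) / 125 * e3
  exact hy5 (by simpa using e4)

lemma F_smul (c : ℂ) (v : Fin 2 → ℂ) : F (c • v) = c ^ 12 * F v := by
  simp only [F, Pi.smul_apply, smul_eq_mul]
  ring

lemma F_zero : F 0 = 0 := by simp [F]

/-- If `F` is constant along the affine line `v + ℂ w` with `v ∉ ℂ w`, then in the basis `v, w` the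
form `F` is a multiple of a twelfth power, so it is singular at `w` and `w = 0`. -/
lemma eq_zero_of_const {v w : Fin 2 → ℂ} (h : ∀ s : ℂ, F (v + s • w) = F v)
    (hvw : v 0 * w 1 - v 1 * w 0 ≠ 0) : w = 0 := by
  let A : Polynomial ℂ := Polynomial.C (w 0) + Polynomial.C (v 0) * Polynomial.X
  let B : Polynomial ℂ := Polynomial.C (w 1) + Polynomial.C (v 1) * Polynomial.X
  let P : Polynomial ℂ := A * B * (A ^ 10 + 11 * A ^ 5 * B ^ 5 - B ^ 10)
  -- `P` is `F (w + X v)`; for `r ≠ 0` homogeneity turns `F (w + r v)` into `r¹² F (v + r⁻¹ w)`.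
  have hP : P = Polynomial.C (F v) * Polynomial.X ^ 12 := by
    apply mul_right_cancel₀ (Polynomial.X_ne_zero (R := ℂ))
    apply Polynomial.funext
    intro r
    by_cases hr : r = 0
    · simp [hr]
    have h1 := F_smul r (v + r⁻¹ • w)
    rw [h, smul_add, smul_smul, mul_inv_cancel₀ hr, one_smul] at h1
    simp only [F, Pi.smul_apply, Pi.add_apply, smul_eq_mul] at h1
    simp only [P, A, B, F, Polynomial.eval_mul, Polynomial.eval_add, Polynomial.eval_sub,
      Polynomial.eval_pow, Polynomial.eval_C, Polynomial.eval_X, Polynomial.eval_ofNat]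
    linear_combination r * h1
  have h0 := congrArg (Polynomial.eval 0) hP
  have h1 := congrArg (fun Q => Polynomial.eval 0 (Polynomial.derivative Q)) hP
  simp [P, A, B, Polynomial.derivative_pow] at h0 h1
  -- Euler's relation at `w`.
  have hE : Fx (w 0) (w 1) * w 0 + Fy (w 0) (w 1) * w 1 = 0 := by
    have : w 0 * w 1 * (w 0 ^ 10 + 11 * w 0 ^ 5 * w 1 ^ 5 - w 1 ^ 10) = 0 := by
      simpa [or_assoc] using h0
    simp only [Fx, Fy]
    linear_combination 12 * this
  have hD : Fx (w 0) (w 1) * v 0 + Fy (w 0) (w 1) * v 1 = 0 := by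
    simp only [Fx, Fy]
    linear_combination h1
  have := eq_zero_of_partials (x := w 0) (y := w 1)
    (by apply mul_left_cancel₀ hvw; linear_combination w 1 * hD - v 1 * hE)
    (by apply mul_left_cancel₀ hvw; linear_combination v 0 * hE - w 0 * hD)
  ext i
  fin_cases i
  · exact this.1
  · exact this.2

lemma exists_smul_of_det {v w : Fin 2 → ℂ} (hw : w ≠ 0) (h : v 0 * w 1 - v 1 * w 0 = 0) :
    ∃ c : ℂ, v = c • w := by
  by_cases h0 : w 0 = 0
  · have h1 : w 1 ≠ 0 := by
      intro h1
      apply hw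
      ext i
      fin_cases i <;> simp [h0, h1]
    refine ⟨v 1 / w 1, ?_⟩
    have : v 0 = 0 := by simpa [h0, h1] using h
    ext i
    fin_cases i <;> simp [h0, h1, this]
  · refine ⟨v 0 / w 0, ?_⟩
    ext i
    fin_cases i
    · simp [h0]
    · simp
      field_simp
      linear_combination -h

/-- The numeral `11` as a constant `C 11`, which evaluation, renaming and derivation rules see. -/
lemma icosPoly_eq :
    icosPoly = X 0 * X 1 * (X 0 ^ 10 + C 11 * X 0 ^ 5 * X 1 ^ 5 - X 1 ^ 10) := rfl

lemma eval_sepForm (v : Fin 4 → ℂ) :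
    eval v (sepForm icosPoly icosPoly) = F ![v 0, v 1] - F ![v 2, v 3] := by
  simp [sepForm, icosPoly_eq, F]

lemma smooth : SmoothSurface (sepForm icosPoly icosPoly) := by
  intro v hv
  by_contra! h
  apply hv
  have h0 := h 0
  have h1 := h 1
  have h2 := h 2
  have h3 := h 3
  simp [sepForm, icosPoly_eq, pderiv_X, Derivation.leibniz_pow] at h0 h1 h2 h3
  have ha := eq_zero_of_partials (x := v 0) (y := v 1)
    (by simp only [Fx]; linear_combination h0) (by simp only [Fy]; linear_combination h1)
  have hb := eq_zero_of_partials (x := v 2) (y := v 3)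
    (by simp only [Fx]; linear_combination -h2) (by simp only [Fy]; linear_combination -h3)
  ext i
  fin_cases i
  · exact ha.1
  · exact ha.2
  · exact hb.1
  · exact hb.2

/-! ### The group of automorphisms of the form -/

/-- The standard plane. -/
abbrev V := Fin 2 → ℂ

/-- The group of linear automorphisms of `ℂ²` preserving `F`. -/
def G : Subgroup (V ≃ₗ[ℂ] V) where
  carrier := {M | ∀ v, F (M v) = F v}
  mul_mem' := by
    intro M N hM hN v
    rw [LinearEquiv.mul_apply, hM, hN]
  one_mem' := fun v => rfl
  inv_mem' := by
    intro M hM v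
    have h := hM (M⁻¹ v)
    rw [← h, ← LinearEquiv.mul_apply, mul_inv_cancel, LinearEquiv.coe_one, id]

lemma mem_G {M : V ≃ₗ[ℂ] V} : M ∈ G ↔ ∀ v, F (M v) = F v := Iff.rfl

/-- A linear map preserving `F` is injective: along its kernel `F` would be constant. -/
lemma injective_of_preserves (M : V →ₗ[ℂ] V) (h : ∀ v, F (M v) = F v) :
    Function.Injective M := by
  rw [← LinearMap.ker_eq_bot, LinearMap.ker_eq_bot']
  intro w hw
  by_contra hw0
  have key : ∀ v : V, v 0 * w 1 - v 1 * w 0 = 0 := by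
    intro v
    by_contra hv
    refine hw0 (eq_zero_of_const (v := v) (fun s => ?_) hv)
    rw [← h, map_add, map_smul, hw, smul_zero, add_zero, h]
  have h1 := key ![1, 0]
  have h2 := key ![0, 1]
  apply hw0
  ext i
  fin_cases i
  · simpa using h2
  · simpa using h1

lemma exists_mem_G (M : V →ₗ[ℂ] V) (h : ∀ v, F (M v) = F v) :
    ∃ N ∈ G, (N : V →ₗ[ℂ] V) = M :=
  ⟨LinearEquiv.ofInjectiveEndo M (injective_of_preserves M h), h, rfl⟩

lemma exists_matrix_mem_G (a b c d : ℂ)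
    (h : ∀ x y : ℂ, F ![a * x + b * y, c * x + d * y] = F ![x, y]) :
    ∃ N ∈ G, ∀ v : V, N v = ![a * v 0 + b * v 1, c * v 0 + d * v 1] := by
  have hv : ∀ v : V, Matrix.toLin' !![a, b; c, d] v
      = ![a * v 0 + b * v 1, c * v 0 + d * v 1] := by
    intro v
    ext i
    fin_cases i <;> simp [Matrix.mulVec, dotProduct, Fin.sum_univ_two]
  obtain ⟨N, hN, hNM⟩ := exists_mem_G (Matrix.toLin' !![a, b; c, d]) (by
    intro v
    rw [hv, h]
    simp [F])
  refine ⟨N, hN, fun v => ?_⟩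
  rw [← hv, ← hNM]
  rfl

/-- The diagonal elements of `G`. -/
lemma exists_diag_mem_G {a d : ℂ} (h1 : a ^ 11 * d = 1) (h2 : a ^ 6 * d ^ 6 = 1)
    (h3 : a * d ^ 11 = 1) : ∃ N ∈ G, ∀ v : V, N v = ![a * v 0, d * v 1] := by
  obtain ⟨N, hN, h⟩ := exists_matrix_mem_G a 0 0 d (by
    intro x y
    simp only [F, Matrix.cons_val_zero, Matrix.cons_val_one]
    linear_combination x ^ 11 * y * h1 + 11 * x ^ 6 * y ^ 6 * h2 - x * y ^ 11 * h3)
  exact ⟨N, hN, fun v => by simp [h]⟩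

lemma exists_swap_mem_G : ∃ N ∈ G, ∀ v : V, N v = ![v 1, -v 0] := by
  obtain ⟨N, hN, h⟩ := exists_matrix_mem_G 0 1 (-1) 0 (by
    intro x y
    simp only [F, Matrix.cons_val_zero, Matrix.cons_val_one]
    ring)
  exact ⟨N, hN, fun v => by simp [h]⟩

/-- With `g` the golden ratio, `[x : y] ↦ [x + g y : g x - y]` is a half-turn of the icosahedron
that moves the vertex `[1 : 0]` to `[1 : g]`, so it multiplies `F` by a constant; a scalar multiple
of it preserves `F`. -/
lemma exists_turn_mem_G {g : ℂ} (hg : g ^ 2 = g + 1) :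
    ∃ l : ℂ, l ≠ 0 ∧ ∃ N ∈ G, ∀ v : V, N v = l • ![v 0 + g * v 1, g * v 0 - v 1] := by
  have hg0 : g ≠ 0 := by
    rintro rfl
    norm_num at hg
  obtain ⟨l, hl⟩ := IsAlgClosed.exists_pow_nat_eq ((125 * g ^ 6)⁻¹) (n := 12) (by norm_num)
  have hl' : l ^ 12 * (125 * g ^ 6) = 1 := by
    rw [hl]
    field_simp
  have hl0 : l ≠ 0 := by
    rintro rfl
    norm_num at hl'
  have key : ∀ x y : ℂ, F ![x + g * y, g * x - y] = 125 * g ^ 6 * F ![x, y] := by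
    intro x y
    simp only [F, Matrix.cons_val_zero, Matrix.cons_val_one]
    have g3 : g ^ 3 = 2 * g + 1 := by linear_combination (g + 1) * hg
    have g4 : g ^ 4 = 3 * g + 2 := by linear_combination g * g3 + 2 * hg
    have g5 : g ^ 5 = 5 * g + 3 := by linear_combination g * g4 + 3 * hg
    have g6 : g ^ 6 = 8 * g + 5 := by linear_combination g * g5 + 5 * hg
    have g7 : g ^ 7 = 13 * g + 8 := by linear_combination g * g6 + 8 * hg
    have g8 : g ^ 8 = 21 * g + 13 := by linear_combination g * g7 + 13 * hg
    have g9 : g ^ 9 = 34 * g + 21 := by linear_combination g * g8 + 21 * hg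
    have g10 : g ^ 10 = 55 * g + 34 := by linear_combination g * g9 + 34 * hg
    have g11 : g ^ 11 = 89 * g + 55 := by linear_combination g * g10 + 55 * hg
    have g12 : g ^ 12 = 144 * g + 89 := by linear_combination g * g11 + 89 * hg
    ring_nf
    simp only [g3, g4, g5, g6, g7, g8, g9, g10, g11, g12, hg]
    ring
  obtain ⟨N, hN, h⟩ := exists_matrix_mem_G l (l * g) (l * g) (-l) (by
    intro x y
    have h1 : (![l * x + l * g * y, l * g * x + -l * y] : V)
        = l • ![x + g * y, g * x - y] := by
      ext i
      fin_cases i <;> simp <;> ring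
    rw [h1, F_smul, key, ← mul_assoc, hl', one_mul])
  refine ⟨l, hl0, N, hN, fun v => ?_⟩
  rw [h]
  ext i
  fin_cases i <;> simp <;> ring

/-! ### Transitivity on the zeros -/

/-- The vector `v` represents a point of the `G`-orbit of `[1 : 0]`. -/
def InOrbit (v : V) : Prop := ∃ M ∈ G, ∃ c : ℂ, c ≠ 0 ∧ M ![1, 0] = c • v

lemma InOrbit.step {v w : V} (hv : InOrbit v) {N : V ≃ₗ[ℂ] V} (hN : N ∈ G) {k : ℂ} (hk : k ≠ 0)
    (h : N v = k • w) : InOrbit w := by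
  obtain ⟨M, hM, c, hc, hMc⟩ := hv
  refine ⟨N * M, mul_mem hN hM, c * k, mul_ne_zero hc hk, ?_⟩
  rw [LinearEquiv.mul_apply, hMc, map_smul, h, smul_smul]

lemma inOrbit_base : InOrbit ![1, 0] := ⟨1, one_mem _, 1, one_ne_zero, by simp⟩

/-- Diagonal elements of `G` permute transitively the points `[u : 1]` with a given nonzero value of
`u⁵`. -/
lemma inOrbit_of_pow_eq {h u : ℂ} (hh : h ≠ 0) (hO : InOrbit ![h, 1]) (hu : u ^ 5 = h ^ 5) :
    InOrbit ![u, 1] := by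
  have hu0 : u ≠ 0 := by
    rintro rfl
    exact pow_ne_zero 5 hh (by simpa using hu.symm)
  obtain ⟨z, hz⟩ : ∃ z, z = u / h := ⟨_, rfl⟩
  have hz5 : z ^ 5 = 1 := by
    rw [hz, div_pow, hu, div_self (pow_ne_zero _ hh)]
  have hz0 : z ≠ 0 := by
    rw [hz]
    exact div_ne_zero hu0 hh
  obtain ⟨d, hd⟩ := IsAlgClosed.exists_pow_nat_eq ((z ^ 11)⁻¹) (n := 12) (by norm_num)
  have hd1 : z ^ 11 * d ^ 12 = 1 := by
    rw [hd, mul_inv_cancel₀ (pow_ne_zero _ hz0)]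
  have hd0 : d ≠ 0 := by
    rintro rfl
    norm_num at hd1
  obtain ⟨N, hN, hNv⟩ := exists_diag_mem_G (a := z * d) (d := d)
    (by linear_combination hd1)
    (by linear_combination hd1 - z ^ 6 * d ^ 12 * hz5)
    (by linear_combination hd1 - z * d ^ 12 * (z ^ 5 + 1) * hz5)
  refine hO.step hN hd0 ?_
  rw [hNv, hz]
  ext i
  fin_cases i
  · simp
    field_simp
  · simp

/-- Every zero of `F` in `ℙ¹` lies in the orbit of `[1 : 0]`. -/
lemma inOrbit_of_F_eq_zero {v : V} (hv : v ≠ 0) (hF : F v = 0) : InOrbit v := by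
  obtain ⟨s, hs⟩ := IsAlgClosed.exists_pow_nat_eq (5 : ℂ) (n := 2) (by norm_num)
  obtain ⟨g, hg⟩ : ∃ g : ℂ, g ^ 2 = g + 1 := ⟨(1 + s) / 2, by linear_combination hs / 4⟩
  have hg0 : g ≠ 0 := by
    rintro rfl
    norm_num at hg
  obtain ⟨l, hl, T, hT, hTv⟩ := exists_turn_mem_G hg
  obtain ⟨S, hS, hSv⟩ := exists_swap_mem_G
  have o0 : InOrbit ![0, 1] := inOrbit_base.step hS (k := -1) (by norm_num) (by
    rw [hSv]
    ext i
    fin_cases i <;> simp)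
  have o1 : InOrbit ![1, g] := inOrbit_base.step hT hl (by
    rw [hTv]
    simp)
  have o2 : InOrbit ![g⁻¹, 1] := o1.step (one_mem G) hg0 (by
    ext i
    fin_cases i <;> simp [hg0])
  have o3 : InOrbit ![-g, 1] := o1.step hS (k := -1) (by norm_num) (by
    rw [hSv]
    ext i
    fin_cases i <;> simp)
  by_cases h1 : v 1 = 0
  · have h0 : v 0 ≠ 0 := by
      intro h0
      apply hv
      ext i
      fin_cases i <;> simp [h0, h1]
    refine inOrbit_base.step (one_mem G) (inv_ne_zero h0) ?_
    ext i
    fin_cases i <;> simp [h0, h1]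
  obtain ⟨u, hu⟩ : ∃ u, u = v 0 / v 1 := ⟨_, rfl⟩
  suffices h : InOrbit ![u, 1] by
    refine h.step (one_mem G) (inv_ne_zero h1) ?_
    ext i
    fin_cases i
    · simp [hu]
      field_simp
    · simp [h1]
  have hv0 : v 0 = u * v 1 := by
    rw [hu]
    field_simp
  by_cases hu0 : u = 0
  · rwa [hu0]
  have hq : (u ^ 5) ^ 2 + 11 * u ^ 5 - 1 = 0 := by
    apply mul_left_cancel₀ (mul_ne_zero hu0 (pow_ne_zero 12 h1))
    rw [F, hv0] at hF
    linear_combination hF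
  have hg5 : g ^ 5 = 5 * g + 3 := by linear_combination (g ^ 3 + g ^ 2 + 2 * g + 3) * hg
  -- The values of `u⁵` at the zeros other than `0, ∞` are `g⁻⁵` and `-g⁵`.
  have hgi : (g⁻¹) ^ 5 = 5 * g - 8 := by
    rw [inv_pow, hg5, inv_eq_iff_eq_inv]
    refine eq_inv_of_mul_eq_one_left ?_
    linear_combination 25 * hg
  have hfac : (u ^ 5 - (g⁻¹) ^ 5) * (u ^ 5 - (-g) ^ 5) = 0 := by
    rw [hgi, show (-g) ^ 5 = -(5 * g + 3) by rw [← hg5]; ring]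
    linear_combination hq - 25 * hg
  rcases mul_eq_zero.mp hfac with h | h
  · exact inOrbit_of_pow_eq (inv_ne_zero hg0) o2 (sub_eq_zero.mp h)
  · exact inOrbit_of_pow_eq (neg_ne_zero.mpr hg0) o3 (sub_eq_zero.mp h)

/-! ### The order of the group -/

/-- An upper triangular element of `G` is diagonal: the form `F` has no `x¹⁰y²` term. -/
lemma coeffs_of_triangular {a b d : ℂ}
    (h : ∀ x y : ℂ, F ![a * x + b * y, d * y] = F ![x, y]) :
    b = 0 ∧ a ^ 11 * d = 1 ∧ a ^ 6 * d ^ 6 = 1 ∧ a * d ^ 11 = 1 := by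
  have ext_zero : ∀ c : Fin 12 → ℂ, (∀ x : ℂ, ∑ i, c i * x ^ (i : ℕ) = 0) → ∀ i, c i = 0 := by
    intro c hc i
    have hp : (∑ j : Fin 12, Polynomial.monomial (j : ℕ) (c j) : Polynomial ℂ) = 0 := by
      apply Polynomial.funext
      intro x
      simpa [Polynomial.eval_finsetSum] using hc x
    have := congrArg (fun p => Polynomial.coeff p (i : ℕ)) hp
    simpa [Polynomial.finsetSum_coeff, Polynomial.coeff_monomial, Fin.val_inj] using this
  -- The coefficients of `F (a x + b, d) - F (x, 1)` as a polynomial in `x`.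
  have hc := ext_zero ![
    b ^ 11 * d + 11 * b ^ 6 * d ^ 6 - b * d ^ 11,
    11 * a * b ^ 10 * d + 66 * a * b ^ 5 * d ^ 6 - a * d ^ 11 + 1,
    55 * a ^ 2 * b ^ 9 * d + 165 * a ^ 2 * b ^ 4 * d ^ 6,
    165 * a ^ 3 * b ^ 8 * d + 220 * a ^ 3 * b ^ 3 * d ^ 6,
    330 * a ^ 4 * b ^ 7 * d + 165 * a ^ 4 * b ^ 2 * d ^ 6,
    462 * a ^ 5 * b ^ 6 * d + 66 * a ^ 5 * b * d ^ 6,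
    462 * a ^ 6 * b ^ 5 * d + 11 * a ^ 6 * d ^ 6 - 11,
    330 * a ^ 7 * b ^ 4 * d,
    165 * a ^ 8 * b ^ 3 * d,
    55 * a ^ 9 * b ^ 2 * d,
    11 * a ^ 10 * b * d,
    a ^ 11 * d - 1] (by
      intro x
      have hx := h x 1
      simp only [F, Matrix.cons_val_zero, Matrix.cons_val_one] at hx
      simp [Fin.sum_univ_succ]
      linear_combination hx)
  have h11 : a ^ 11 * d - 1 = 0 := hc 11
  have h10 : 11 * a ^ 10 * b * d = 0 := hc 10
  have h6 : 462 * a ^ 6 * b ^ 5 * d + 11 * a ^ 6 * d ^ 6 - 11 = 0 := hc 6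
  have h1 : 11 * a * b ^ 10 * d + 66 * a * b ^ 5 * d ^ 6 - a * d ^ 11 + 1 = 0 := hc 1
  have hb : b = 0 := by linear_combination (a / 11) * h10 - b * h11
  subst hb
  refine ⟨rfl, ?_, ?_, ?_⟩
  · linear_combination h11
  · linear_combination h6 / 11
  · linear_combination -h1

open scoped LinearAlgebra.Projectivization

/-- The zeros of `F` in `ℙ¹`, i.e. the vertices of the icosahedron. -/
def R : Set (ℙ ℂ V) := {p | F p.rep = 0}

lemma F_mem_span {v w : V} (hv : F v = 0) (hw : w ∈ Submodule.span ℂ {v}) : F w = 0 := by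
  obtain ⟨c, rfl⟩ := Submodule.mem_span_singleton.mp hw
  rw [F_smul, hv, mul_zero]

lemma mk_mem_R {v : V} (hv : v ≠ 0) : Projectivization.mk ℂ v hv ∈ R ↔ F v = 0 := by
  obtain ⟨a, ha⟩ := Projectivization.exists_smul_eq_mk_rep ℂ v hv
  change F (Projectivization.mk ℂ v hv).rep = 0 ↔ _
  rw [← ha, Units.smul_def, F_smul]
  simp

lemma base_ne_zero : (![1, 0] : V) ≠ 0 := fun h => by simpa using congrFun h 0

/-- The zero `[1 : 0]` of `F`. -/
noncomputable def base : ℙ ℂ V := Projectivization.mk ℂ ![1, 0] base_ne_zero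

lemma G_smul_mk (M : G) {v : V} (hv : v ≠ 0) :
    M • Projectivization.mk ℂ v hv =
      Projectivization.mk ℂ (M.1 v) ((LinearEquiv.map_ne_zero_iff M.1).mpr hv) := rfl

lemma orbit_base : MulAction.orbit G base = R := by
  ext p
  induction p using Projectivization.ind with
  | h v hv =>
    rw [mk_mem_R]
    constructor
    · rintro ⟨M, hM⟩
      have hM' : M • base = Projectivization.mk ℂ v hv := hM
      rw [base, G_smul_mk, Projectivization.mk_eq_mk_iff'] at hM'
      obtain ⟨a, ha⟩ := hM'
      have h0 : a ^ 12 * F v = 0 := by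
        rw [← F_smul, ha, M.2]
        simp [F]
      rcases mul_eq_zero.mp h0 with h | h
      · exfalso
        have ha0 : a = 0 := by simpa using h
        rw [ha0, zero_smul] at ha
        exact base_ne_zero ((LinearEquiv.map_eq_zero_iff _).mp ha.symm)
      · exact h
    · intro h
      obtain ⟨M, hM, c, hc, hMc⟩ := inOrbit_of_F_eq_zero hv h
      refine ⟨⟨M, hM⟩, ?_⟩
      change (⟨M, hM⟩ : G) • base = Projectivization.mk ℂ v hv
      rw [base, G_smul_mk, Projectivization.mk_eq_mk_iff']
      exact ⟨c, hMc.symm⟩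

lemma mem_stabilizer_base {M : G} :
    M ∈ MulAction.stabilizer G base ↔ M.1 ![1, 0] 1 = 0 := by
  rw [MulAction.mem_stabilizer_iff, base, G_smul_mk, Projectivization.mk_eq_mk_iff']
  constructor
  · rintro ⟨a, ha⟩
    rw [← ha]
    simp
  · intro h
    refine ⟨M.1 ![1, 0] 0, ?_⟩
    ext i
    fin_cases i
    · simp
    · simpa using h.symm

/-- Every element of the stabilizer of `[1 : 0]` is `diag(a, a⁻¹¹)` for some `a` with `a⁶⁰ = 1`. -/
lemma stabilizer_apply {M : G} (hM : M ∈ MulAction.stabilizer G base) :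
    (M.1 ![1, 0] 0) ^ 60 = 1 ∧
      ∀ v : V, M.1 v = ![M.1 ![1, 0] 0 * v 0, ((M.1 ![1, 0] 0) ^ 11)⁻¹ * v 1] := by
  rw [mem_stabilizer_base] at hM
  have hv : ∀ v : V, M.1 v = ![M.1 ![1, 0] 0 * v 0 + M.1 ![0, 1] 0 * v 1, M.1 ![0, 1] 1 * v 1] := by
    intro v
    have h1 : v = v 0 • ![1, 0] + v 1 • ![0, 1] := by
      ext i
      fin_cases i <;> simp
    have h2 : M.1 v = v 0 • M.1 ![1, 0] + v 1 • M.1 ![0, 1] := by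
      conv_lhs => rw [h1]
      rw [map_add, map_smul, map_smul]
    rw [h2]
    ext i
    fin_cases i
    · simp
      ring
    · simp [hM]
      ring
  obtain ⟨hb, h1, h2, h3⟩ := coeffs_of_triangular (a := M.1 ![1, 0] 0) (b := M.1 ![0, 1] 0)
    (d := M.1 ![0, 1] 1) (by
      intro x y
      rw [← M.2 ![x, y], hv ![x, y]]
      simp)
  generalize M.1 ![1, 0] 0 = a at *
  generalize M.1 ![0, 1] 1 = d at *
  have hd : d = (a ^ 11)⁻¹ := eq_inv_of_mul_eq_one_right h1
  refine ⟨?_, fun v => ?_⟩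
  · linear_combination ((a ^ 11 * d) ^ 5 + (a ^ 11 * d) ^ 4 + (a ^ 11 * d) ^ 3 +
      (a ^ 11 * d) ^ 2 + a ^ 11 * d + 1) * h1 - a ^ 60 * h2
  · rw [hv, hb, hd]
    simp

lemma card_stabilizer : Nat.card (MulAction.stabilizer G base) = 60 := by
  have hprim := Complex.isPrimitiveRoot_exp 60 (by norm_num)
  rw [← hprim.card_nthRootsFinset, ← Nat.card_eq_finsetCard]
  have hmem {x : ℂ} : x ∈ Polynomial.nthRootsFinset 60 (1 : ℂ) ↔ x ^ 60 = 1 :=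
    Polynomial.mem_nthRootsFinset (by norm_num) 1
  refine Nat.card_congr (Equiv.ofBijective
    (fun M => ⟨M.1.1 ![1, 0] 0, hmem.mpr (stabilizer_apply M.2).1⟩) ⟨?_, ?_⟩)
  · intro M N h
    have h' : M.1.1 ![1, 0] 0 = N.1.1 ![1, 0] 0 := congrArg Subtype.val h
    apply Subtype.ext
    apply Subtype.ext
    apply LinearEquiv.ext
    intro v
    rw [(stabilizer_apply M.2).2 v, (stabilizer_apply N.2).2 v, h']
  · rintro ⟨a, ha⟩
    rw [hmem] at ha
    have ha0 : a ≠ 0 := by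
      rintro rfl
      norm_num at ha
    have hd : a ^ 11 * (a ^ 11)⁻¹ = 1 := mul_inv_cancel₀ (pow_ne_zero _ ha0)
    generalize (a ^ 11)⁻¹ = d at hd
    have hd1 : d = a ^ 49 := by linear_combination a ^ 49 * hd - d * ha
    subst hd1
    obtain ⟨N, hN, hNv⟩ := exists_diag_mem_G (a := a) (d := a ^ 49)
      (by linear_combination ha)
      (by linear_combination (a ^ 240 + a ^ 180 + a ^ 120 + a ^ 60 + 1) * ha)
      (by linear_combination (a ^ 480 + a ^ 420 + a ^ 360 + a ^ 300 + a ^ 240 + a ^ 180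
        + a ^ 120 + a ^ 60 + 1) * ha)
    refine ⟨⟨⟨N, hN⟩, mem_stabilizer_base.mpr (by simp [hNv])⟩, ?_⟩
    apply Subtype.ext
    simp [hNv]

lemma card_G : Nat.card G = Nat.card R * 60 := by
  rw [← Subgroup.card_mul_index (MulAction.stabilizer G base), MulAction.index_stabilizer,
    orbit_base, card_stabilizer, mul_comm, Set.ncard_def]
  rfl

/-- The dehomogenization `u¹¹ + 11u⁶ - u` of `F`. -/
noncomputable def pol : Polynomial ℂ :=
  Polynomial.X ^ 11 + 11 * Polynomial.X ^ 6 - Polynomial.X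

lemma pol_natDegree : pol.natDegree = 11 := by
  unfold pol
  compute_degree!

lemma pol_separable : pol.Separable := by
  rw [Polynomial.separable_def,
    Polynomial.isCoprime_iff_aeval_ne_zero_of_isAlgClosed ℂ ℂ]
  intro u
  by_contra! h
  obtain ⟨h1, h2⟩ := h
  simp [pol, Polynomial.derivative_pow] at h1 h2
  have := eq_zero_of_partials (x := u) (y := 1)
    (by simp only [Fx]; linear_combination h2)
    (by simp only [Fy]; linear_combination 12 * h1 - u * h2)
  exact one_ne_zero this.2

lemma card_R : Nat.card R = 12 := by
  have hne : ∀ u : ℂ, (![u, 1] : V) ≠ 0 := fun u h => by simpa using congrFun h 1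
  let m : ℂ → ℙ ℂ V := fun u => Projectivization.mk ℂ ![u, 1] (hne u)
  have hm : Function.Injective m := by
    intro u v h
    obtain ⟨a, ha⟩ := (Projectivization.mk_eq_mk_iff' ℂ _ _ _ _).mp h
    have h0 := congrFun ha 0
    have h1 := congrFun ha 1
    simp at h0 h1
    rw [← h0, h1, one_mul]
  have hR : R = insert base (m '' pol.rootSet ℂ) := by
    ext p
    induction p using Projectivization.ind with
    | h v hv =>
      rw [mk_mem_R, Set.mem_insert_iff, Set.mem_image]
      have hp0 : pol ≠ 0 := pol_separable.ne_zero
      simp only [Polynomial.mem_rootSet_of_ne hp0]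
      by_cases h1 : v 1 = 0
      · have hb : Projectivization.mk ℂ v hv = base := by
          refine (Projectivization.mk_eq_mk_iff' ℂ _ _ _ _).mpr ⟨v 0, ?_⟩
          ext i
          fin_cases i <;> simp [h1]
        simp [hb, F, h1]
      · have hb : Projectivization.mk ℂ v hv ≠ base := by
          intro h
          obtain ⟨a, ha⟩ := (Projectivization.mk_eq_mk_iff' ℂ _ _ _ _).mp h
          exact h1 (by simpa using (congrFun ha 1).symm)
        have hu : m (v 0 / v 1) = Projectivization.mk ℂ v hv := by
          refine (Projectivization.mk_eq_mk_iff' ℂ _ _ _ _).mpr ⟨(v 1)⁻¹, ?_⟩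
          ext i
          fin_cases i
          · simp [div_eq_inv_mul]
          · simp [h1]
        have hF : F v = v 1 ^ 12 * Polynomial.aeval (v 0 / v 1) pol := by
          simp only [F, pol, map_sub, map_add, map_mul, map_pow, Polynomial.aeval_X, map_ofNat]
          field_simp
        simp only [hb, false_or, hF, mul_eq_zero, ne_eq, OfNat.ofNat_ne_zero, not_false_eq_true,
          pow_eq_zero_iff, h1]
        constructor
        · intro h
          exact ⟨_, by simpa [h1] using h, hu⟩
        · rintro ⟨x, hx, hxv⟩
          rwa [← hm (hxv.trans hu.symm)]
  rw [Nat.card_coe_set_eq, hR, Set.ncard_insert_of_notMem, Set.ncard_image_of_injective _ hm,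
    ← Nat.card_coe_set_eq, Nat.card_eq_fintype_card,
    Polynomial.card_rootSet_eq_natDegree pol_separable (IsAlgClosed.splits_domain _),
    pol_natDegree]
  rintro ⟨u, -, hu⟩
  obtain ⟨a, ha⟩ := (Projectivization.mk_eq_mk_iff' ℂ _ _ _ _).mp hu
  simpa using congrFun ha 1

/-! ### Lines on the surface -/

/-- The lines on the surface, as planes in `ℂ² × ℂ²` on which the two copies of `F` agree. -/
def Lines : Type :=
  {W : Submodule ℂ (V × V) // Module.finrank ℂ W = 2 ∧ ∀ x ∈ W, F x.1 = F x.2}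

lemma finrank_prod_submodule (p q : ℙ ℂ V) :
    Module.finrank ℂ (p.submodule.prod q.submodule) = 2 := by
  let e : (p.submodule.prod q.submodule) ≃ₗ[ℂ] p.submodule × q.submodule :=
    { toFun := fun x => (⟨x.1.1, x.2.1⟩, ⟨x.1.2, x.2.2⟩)
      invFun := fun x => ⟨(x.1.1, x.2.1), ⟨x.1.2, x.2.2⟩⟩
      map_add' := fun _ _ => rfl
      map_smul' := fun _ _ => rfl
      left_inv := fun _ => rfl
      right_inv := fun _ => rfl }
  rw [e.finrank_eq, Module.finrank_prod, Projectivization.finrank_submodule,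
    Projectivization.finrank_submodule]

lemma F_eq_zero_of_mem {p : ℙ ℂ V} (hp : p ∈ R) {v : V} (hv : v ∈ p.submodule) : F v = 0 := by
  rw [Projectivization.submodule_eq] at hv
  exact F_mem_span hp hv

/-- The line joining the point `p` of `z = t = 0` to the point `q` of `x = y = 0`. -/
noncomputable def joinLine (p q : R) : Lines :=
  ⟨p.1.submodule.prod q.1.submodule, finrank_prod_submodule _ _, fun x hx => by
    rw [F_eq_zero_of_mem p.2 hx.1, F_eq_zero_of_mem q.2 hx.2]⟩

/-- The graph of an automorphism of `F`. -/
def graphLine (M : G) : Lines :=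
  ⟨(M.1 : V →ₗ[ℂ] V).graph, by
    rw [LinearMap.graph_eq_range_prod, LinearMap.finrank_range_of_inj]
    · simp
    · intro v w h
      exact congrArg Prod.fst h, by
    intro x hx
    rw [LinearMap.mem_graph_iff] at hx
    rw [hx]
    exact (M.2 x.1).symm⟩

lemma joinLine_inj {p q p' q' : R} (h : joinLine p q = joinLine p' q') : p = p' ∧ q = q' := by
  have h' : p.1.submodule.prod q.1.submodule = p'.1.submodule.prod q'.1.submodule :=
    congrArg Subtype.val h
  constructor
  · apply Subtype.ext
    apply Projectivization.submodule_injective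
    ext v
    have : ((v, 0) : V × V) ∈ p.1.submodule.prod q.1.submodule ↔
      ((v, 0) : V × V) ∈ p'.1.submodule.prod q'.1.submodule := by rw [h']
    simpa [Submodule.mem_prod] using this
  · apply Subtype.ext
    apply Projectivization.submodule_injective
    ext v
    have : ((0, v) : V × V) ∈ p.1.submodule.prod q.1.submodule ↔
      ((0, v) : V × V) ∈ p'.1.submodule.prod q'.1.submodule := by rw [h']
    simpa [Submodule.mem_prod] using this

lemma graphLine_inj {M N : G} (h : graphLine M = graphLine N) : M = N := by
  have h' : (M.1 : V →ₗ[ℂ] V).graph = (N.1 : V →ₗ[ℂ] V).graph := congrArg Subtype.val h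
  apply Subtype.ext
  apply LinearEquiv.ext
  intro v
  have : ((v, M.1 v) : V × V) ∈ (N.1 : V →ₗ[ℂ] V).graph := by
    rw [← h', LinearMap.mem_graph_iff]
    rfl
  exact (LinearMap.mem_graph_iff _ _).mp this

lemma joinLine_ne_graphLine (p q : R) (M : G) : joinLine p q ≠ graphLine M := by
  intro h
  have h' : p.1.submodule.prod q.1.submodule = (M.1 : V →ₗ[ℂ] V).graph := congrArg Subtype.val h
  have hq : q.1.rep ∈ q.1.submodule := by
    rw [Projectivization.submodule_eq]
    exact Submodule.mem_span_singleton_self _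
  have : ((0, q.1.rep) : V × V) ∈ (M.1 : V →ₗ[ℂ] V).graph := by
    rw [← h']
    exact ⟨zero_mem _, hq⟩
  rw [LinearMap.mem_graph_iff] at this
  exact q.1.rep_nonzero (by simpa using this)

/-- Segre's dichotomy: a line on the surface that misses `x = y = 0` is the graph of an automorphism
of `F`, and any other one joins two zeros of `F`. -/
lemma exists_join_or_graph (L : Lines) :
    (∃ p q : R, joinLine p q = L) ∨ ∃ M : G, graphLine M = L := by
  obtain ⟨W, hdim, hF⟩ := L
  by_cases hw : ∃ w : V, w ≠ 0 ∧ ((0, w) : V × V) ∈ W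
  · left
    obtain ⟨w, hw0, hwW⟩ := hw
    have hFw : F w = 0 := by
      have := hF _ hwW
      rw [← this, F_zero]
    have hsnd : ∀ x ∈ W, ∃ c : ℂ, x.2 = c • w := by
      intro x hx
      apply exists_smul_of_det hw0
      by_contra hdet
      refine hw0 (eq_zero_of_const (v := x.2) (fun s => ?_) hdet)
      have h1 := hF _ (W.add_mem hx (W.smul_mem s hwW))
      have h2 := hF _ hx
      simp only [Prod.fst_add, Prod.smul_fst, smul_zero, add_zero, Prod.snd_add,
        Prod.smul_snd] at h1
      rw [← h1, h2]
    obtain ⟨u, hu0, huW⟩ : ∃ u : V, u ≠ 0 ∧ ((u, 0) : V × V) ∈ W := by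
      by_contra! hcon
      have hle : W ≤ Submodule.span ℂ {((0, w) : V × V)} := by
        intro x hx
        obtain ⟨c, hc⟩ := hsnd x hx
        have hx1 : x.1 = 0 := by
          by_contra hx1
          refine hcon x.1 hx1 ?_
          have := W.sub_mem hx (W.smul_mem c hwW)
          convert this using 1
          ext <;> simp [hc]
        rw [Submodule.mem_span_singleton]
        refine ⟨c, ?_⟩
        ext <;> simp [hc, hx1]
      have h1 := Submodule.finrank_mono hle
      have h2 := finrank_span_singleton (K := ℂ) (v := ((0, w) : V × V))
        (fun h => hw0 (congrArg Prod.snd h))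
      omega
    have hFu : F u = 0 := by
      have := hF _ huW
      rw [this, F_zero]
    refine ⟨⟨_, (mk_mem_R hu0).mpr hFu⟩, ⟨_, (mk_mem_R hw0).mpr hFw⟩, ?_⟩
    apply Subtype.ext
    refine Submodule.eq_of_le_of_finrank_eq ?_ ?_
    · rintro ⟨a, b⟩ ⟨ha, hb⟩
      simp only [Projectivization.submodule_mk] at ha hb
      obtain ⟨c, rfl⟩ := Submodule.mem_span_singleton.mp ha
      obtain ⟨d, rfl⟩ := Submodule.mem_span_singleton.mp hb
      have := W.add_mem (W.smul_mem c huW) (W.smul_mem d hwW)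
      simpa using this
    · rw [hdim]
      exact finrank_prod_submodule _ _
  · right
    push Not at hw
    let π : W →ₗ[ℂ] V := LinearMap.fst ℂ V V ∘ₗ W.subtype
    have hinj : Function.Injective π := by
      rw [← LinearMap.ker_eq_bot, LinearMap.ker_eq_bot']
      rintro ⟨⟨a, b⟩, hx⟩ h
      have ha : a = 0 := h
      subst ha
      have hb : b = 0 := by
        by_contra hb
        exact hw b hb hx
      subst hb
      rfl
    have hsurj : Function.Surjective π :=
      (LinearMap.injective_iff_surjective_of_finrank_eq_finrank (by simp [hdim])).mp hinj
    obtain ⟨f, hf⟩ := Submodule.exists_eq_graph (G := W) ⟨hinj, hsurj⟩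
    subst hf
    obtain ⟨M, hM, hMf⟩ := exists_mem_G f (fun v => (hF (v, f v) rfl).symm)
    refine ⟨⟨M, hM⟩, ?_⟩
    apply Subtype.ext
    exact congrArg LinearMap.graph hMf

lemma card_Lines : Nat.card Lines = 864 := by
  have hR : Finite R := Nat.finite_of_card_ne_zero (by rw [card_R]; norm_num)
  have hG : Finite G := Nat.finite_of_card_ne_zero (by rw [card_G, card_R]; norm_num)
  have hbij : Function.Bijective
      (Sum.elim (fun x : R × R => joinLine x.1 x.2) graphLine) := by
    constructor
    · rintro (⟨p, q⟩ | M) (⟨p', q'⟩ | N) h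
      · obtain ⟨rfl, rfl⟩ := joinLine_inj h
        rfl
      · exact absurd h (joinLine_ne_graphLine _ _ _)
      · exact absurd h.symm (joinLine_ne_graphLine _ _ _)
      · rw [graphLine_inj h]
    · intro L
      rcases exists_join_or_graph L with ⟨p, q, h⟩ | ⟨M, h⟩
      · exact ⟨Sum.inl (p, q), h⟩
      · exact ⟨Sum.inr M, h⟩
  rw [← Nat.card_eq_of_bijective _ hbij, Nat.card_sum, Nat.card_prod, card_G, card_R]

/-- The splitting of `ℂ⁴` with coordinates `x, y, z, t` into the `x, y` and `z, t` planes. -/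
def splitCoords : (Fin 4 → ℂ) ≃ₗ[ℂ] V × V where
  toFun v := (![v 0, v 1], ![v 2, v 3])
  invFun p := ![p.1 0, p.1 1, p.2 0, p.2 1]
  map_add' v w := by
    ext i <;> fin_cases i <;> rfl
  map_smul' c v := by
    ext i <;> fin_cases i <;> rfl
  left_inv v := by
    ext i
    fin_cases i <;> rfl
  right_inv p := by
    ext i <;> fin_cases i <;> rfl

lemma card_lines_eq :
    Nat.card {W : Submodule ℂ (Fin 4 → ℂ) // IsLine W ∧ LiesOn (sepForm icosPoly icosPoly) W}
      = Nat.card Lines := by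
  refine Nat.card_congr ((Submodule.orderIsoMapComap splitCoords).toEquiv.subtypeEquiv fun W => ?_)
  change IsLine W ∧ _ ↔ Module.finrank ℂ (W.map (splitCoords : (Fin 4 → ℂ) →ₗ[ℂ] V × V)) = 2 ∧
    ∀ x ∈ W.map (splitCoords : (Fin 4 → ℂ) →ₗ[ℂ] V × V), F x.1 = F x.2
  rw [LinearEquiv.finrank_map_eq]
  refine and_congr Iff.rfl ?_
  constructor
  · rintro h _ ⟨v, hv, rfl⟩
    have := h v hv
    rw [eval_sepForm] at this
    exact sub_eq_zero.mp this
  · intro h v hv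
    rw [eval_sepForm]
    exact sub_eq_zero.mpr (h _ ⟨v, hv, rfl⟩)

end Icos

/-- The degree-12 surface `φ(x,y) - φ(z,t) = 0` with `φ = xy(x¹⁰ + 11x⁵y⁵ - y¹⁰)`
is smooth and contains exactly `864` lines. -/
theorem icosahedral_surface_864_lines :
    SmoothSurface (sepForm icosPoly icosPoly) ∧
    Nat.card {W : Submodule ℂ (Fin 4 → ℂ) //
      IsLine W ∧ LiesOn (sepForm icosPoly icosPoly) W} = 864 := by
  exact ⟨Icos.smooth, Icos.card_lines_eq.trans Icos.card_Lines⟩
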